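/- A finitely presented group has finitely generated second integral homology group H₂(G;ℤ). -/

import Mathlib

open CategoryTheory AlgebraicTopology

/-- The `n`-th integral homology of a group `G`: the homology of the alternating face
map complex of the free `ℤ`-module on the nerve of `G` (i.e. the simplicial homology
of the classifying space of `G`). -/
noncomputable def groupHomologyZ (n : ℕ) (G : Type) [Group G] : ModuleCat ℤ :=
  (HomologicalComplex.homologyFunctor (ModuleCat ℤ) (ComplexShape.down ℕ) n).obj
    ((alternatingFaceMapComplex (ModuleCat ℤ)).obj
      (((SimplicialObject.whiskering _ _).obj (ModuleCat.free ℤ)).obj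
        (CategoryTheory.nerve (CategoryTheory.SingleObj G))))

/-- A group is finitely presented if it is isomorphic to a presented group with
finitely many generators and finitely many relations. -/
def IsFinitelyPresentedGroup (G : Type) [Group G] : Prop :=
  ∃ (n : ℕ) (rels : Set (FreeGroup (Fin n))),
    rels.Finite ∧ Nonempty (G ≃* PresentedGroup rels)

/-- The (possibly unnormalized) central extension attached to a 2-cocycle. -/
@[ext]
structure CocExt {G M : Type} [Group G] [AddCommGroup M] (c : G → G → M) where
  fst : M
  snd : G

/-- The 2-cocycle condition with trivial action. -/
def IsCoc {G M : Type} [Group G] [AddCommGroup M] (c : G → G → M) : Prop :=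
  ∀ x y z, c x y + c (x * y) z = c y z + c x (y * z)

theorem IsCoc.one_left {G M : Type} [Group G] [AddCommGroup M] {c : G → G → M} (h : IsCoc c)
    (x : G) : c 1 x = c 1 1 := by
  have := h 1 1 x
  simp only [one_mul] at this
  exact (add_right_cancel this).symm

theorem IsCoc.one_right {G M : Type} [Group G] [AddCommGroup M] {c : G → G → M} (h : IsCoc c)
    (x : G) : c x 1 = c 1 1 := by
  have := h x 1 1
  simp only [mul_one] at this
  exact add_right_cancel this

/-- The group structure on the central extension. -/
@[reducible]
def CocExt.group {G M : Type} [Group G] [AddCommGroup M] {c : G → G → M} (h : IsCoc c) :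
    Group (CocExt c) :=
  letI : Mul (CocExt c) := ⟨fun a b => ⟨a.fst + b.fst + c a.snd b.snd, a.snd * b.snd⟩⟩
  letI : One (CocExt c) := ⟨⟨-c 1 1, 1⟩⟩
  letI : Inv (CocExt c) := ⟨fun a => ⟨-a.fst - c a.snd⁻¹ a.snd - c 1 1, a.snd⁻¹⟩⟩
  Group.ofLeftAxioms
    (by
      intro a b d
      apply CocExt.ext
      · change a.fst + b.fst + c a.snd b.snd + d.fst + c (a.snd * b.snd) d.snd
          = a.fst + (b.fst + d.fst + c b.snd d.snd) + c a.snd (b.snd * d.snd)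
        have := h a.snd b.snd d.snd
        calc _ = a.fst + b.fst + d.fst + (c a.snd b.snd + c (a.snd * b.snd) d.snd) := by abel
          _ = _ := by rw [this]; abel
      · exact mul_assoc _ _ _)
    (by
      intro a
      apply CocExt.ext
      · change -c 1 1 + a.fst + c 1 a.snd = a.fst
        rw [h.one_left a.snd]; abel
      · exact one_mul _)
    (by
      intro a
      apply CocExt.ext
      · change -a.fst - c a.snd⁻¹ a.snd - c 1 1 + a.fst + c a.snd⁻¹ a.snd = -c 1 1
        abel
      · exact inv_mul_cancel _)

theorem coc_key {G M : Type} [Group G] [AddCommGroup M] (hG : IsFinitelyPresentedGroup G)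
    (c : G → G → M) (h : IsCoc c) :
    ∃ (S : Set M) (t : G → M), S.Finite ∧
      ∀ x y, c x y - (t x + t y - t (x * y)) ∈ AddSubgroup.closure S := by
  obtain ⟨n, rels, hfin, ⟨e⟩⟩ := hG
  let _ := CocExt.group h
  have hmul1 : ∀ a b : CocExt c, (a * b).fst = a.fst + b.fst + c a.snd b.snd := fun _ _ => rfl
  have hmul2 : ∀ a b : CocExt c, (a * b).snd = a.snd * b.snd := fun _ _ => rfl
  have hone1 : (1 : CocExt c).fst = - c 1 1 := rfl
  have hone2 : (1 : CocExt c).snd = 1 := rfl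
  have hinv1 : ∀ a : CocExt c, (a⁻¹).fst = -a.fst - c a.snd⁻¹ a.snd - c 1 1 := fun _ => rfl
  have hinv2 : ∀ a : CocExt c, (a⁻¹).snd = a.snd⁻¹ := fun _ => rfl
  let π : FreeGroup (Fin n) →* G := e.symm.toMonoidHom.comp (PresentedGroup.mk rels)
  have hπ : Function.Surjective π := e.symm.surjective.comp (PresentedGroup.mk_surjective rels)
  have hker : ∀ r, π r = 1 → r ∈ Subgroup.normalClosure rels := by
    intro r hr
    rw [← PresentedGroup.mk_eq_one_iff]
    exact (map_eq_one_iff e.symm e.symm.injective).1 hr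
  let φ : FreeGroup (Fin n) →* CocExt c :=
    FreeGroup.lift fun i => ⟨0, π (FreeGroup.of i)⟩
  let pr : CocExt c →* G := ⟨⟨fun a => a.snd, rfl⟩, fun _ _ => rfl⟩
  have hφ : ∀ f, (φ f).snd = π f := by
    have : pr.comp φ = π := by
      apply FreeGroup.ext_hom
      intro i
      simp [φ, pr]
    intro f
    exact DFunLike.congr_fun this f
  let S : Set M := (fun r => (φ r).fst + c 1 1) '' rels
  let N := AddSubgroup.closure S
  let K : Subgroup (CocExt c) :=
    { carrier := {a | a.snd = 1 ∧ a.fst + c 1 1 ∈ N}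
      one_mem' := ⟨rfl, by rw [hone1]; simp⟩
      mul_mem' := by
        rintro a b ⟨ha, ha'⟩ ⟨hb, hb'⟩
        refine ⟨by rw [hmul2, ha, hb, one_mul], ?_⟩
        rw [hmul1, ha, hb]
        convert add_mem ha' hb' using 1
        abel
      inv_mem' := by
        rintro a ⟨ha, ha'⟩
        refine ⟨by rw [hinv2, ha, inv_one], ?_⟩
        rw [hinv1, ha, inv_one]
        convert neg_mem ha' using 1
        abel }
  have hcent : ∀ a b : CocExt c, a.snd = 1 → a * b = b * a := by
    intro a b ha
    apply CocExt.ext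
    · rw [hmul1, hmul1, ha, h.one_left b.snd, h.one_right b.snd]; abel
    · rw [hmul2, hmul2, ha]; simp
  have : K.Normal := ⟨by
    intro a ha g
    rw [← hcent a g ha.1, mul_inv_cancel_right]
    exact ha⟩
  have hle : Subgroup.normalClosure rels ≤ K.comap φ := by
    apply Subgroup.normalClosure_le_normal
    intro r hr
    refine ⟨?_, AddSubgroup.subset_closure ⟨r, hr, rfl⟩⟩
    rw [hφ]
    change e.symm (PresentedGroup.mk rels r) = 1
    rw [PresentedGroup.one_of_mem hr, map_one]
  choose σ hσ using hπ
  refine ⟨S, fun g => -(φ (σ g)).fst, hfin.image _, fun x y => ?_⟩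
  have hr : π (σ x * σ y * (σ (x * y))⁻¹) = 1 := by
    simp [hσ]
  obtain ⟨h1, h2⟩ := hle (hker _ hr)
  set r := σ x * σ y * (σ (x * y))⁻¹ with hrdef
  have e1 : φ (σ x) * φ (σ y) = φ r * φ (σ (x * y)) := by
    rw [← map_mul, ← map_mul, hrdef, inv_mul_cancel_right]
  have e2 := congrArg CocExt.fst e1
  rw [hmul1, hmul1, h1, h.one_left, hφ, hφ, hσ, hσ] at e2
  convert h2 using 1
  rw [← sub_eq_zero] at e2 ⊢
  rw [← e2]
  simp only [neg_neg, sub_eq_add_neg, neg_add_rev]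
  abel

section nerveFaces

variable {C : Type} [Category.{0} C] {X₀ X₁ X₂ X₃ : C} (f : X₀ ⟶ X₁) (g : X₁ ⟶ X₂) (k : X₂ ⟶ X₃)

open ComposableArrows

theorem face0 : (nerve C).δ 0 (mk₃ f g k) = mk₂ g k := rfl

theorem face1 : (nerve C).δ 1 (mk₃ f g k) = mk₂ (f ≫ g) k :=
  ComposableArrows.ext₂ rfl rfl rfl
    ((Category.id_comp _).trans (Category.comp_id _)).symm
    ((Category.id_comp _).trans (Category.comp_id _)).symm

theorem face2 : (nerve C).δ 2 (mk₃ f g k) = mk₂ f (g ≫ k) :=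
  ComposableArrows.ext₂ rfl rfl rfl
    ((Category.id_comp _).trans (Category.comp_id _)).symm
    ((Category.id_comp _).trans (Category.comp_id _)).symm

theorem face3 : (nerve C).δ 3 (mk₃ f g k) = mk₂ f g :=
  ComposableArrows.ext₂ rfl rfl rfl
    ((Category.id_comp _).trans (Category.comp_id _)).symm
    ((Category.id_comp _).trans (Category.comp_id _)).symm

end nerveFaces

/-- The chain complex computing the homology. -/
noncomputable abbrev barK (C : Type) [Category.{0} C] : ChainComplex (ModuleCat ℤ) ℕ :=
  (alternatingFaceMapComplex (ModuleCat ℤ)).obj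
      (((SimplicialObject.whiskering _ _).obj (ModuleCat.free ℤ)).obj (nerve C))

/-- Basis element. -/
noncomputable def bas {C : Type} [Category.{0} C] {n : ℕ} (x : ComposableArrows C n) :
    (barK C).X n :=
  ModuleCat.freeMk (R := ℤ) (X := ComposableArrows C n) x

theorem sum_hom_apply {A B : ModuleCat.{0} ℤ} {n : ℕ} (k : Fin n → ℤ) (f : Fin n → (A ⟶ B)) (a : A) :
    (∑ i, k i • f i).hom a = ∑ i, k i • (f i).hom a := by
  rw [ModuleCat.hom_sum, LinearMap.sum_apply]
  refine Finset.sum_congr rfl fun i _ => ?_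
  rw [ModuleCat.hom_zsmul]
  let ev : (A →ₗ[ℤ] B) →+ B := ⟨⟨fun φ => φ a, rfl⟩, fun _ _ => rfl⟩
  exact map_zsmul ev (k i) (f i).hom

theorem barK_d {C : Type} [Category.{0} C] (n : ℕ) (x : ComposableArrows C (n + 1)) :
    (barK C).d (n + 1) n (bas x) =
      ∑ i : Fin (n + 2), (-1 : ℤ) ^ (i : ℕ) • bas (C := C) (n := n) ((nerve C).δ i x) := by
  have h := alternatingFaceMapComplex_obj_d
    (((SimplicialObject.whiskering _ _).obj (ModuleCat.free ℤ)).obj (nerve C)) n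
  rw [AlternatingFaceMapComplex.objD] at h
  refine (congrArg (fun f => ModuleCat.Hom.hom f (bas x)) h).trans ?_
  refine (sum_hom_apply _ _ _).trans ?_
  refine Finset.sum_congr rfl fun i _ => ?_
  refine congrArg (fun v : (barK C).X n => (-1 : ℤ) ^ (i : ℕ) • v) ?_
  exact ModuleCat.free_map_apply _ _

theorem fg_of_inj {A M : Type} [AddCommGroup A] [AddCommGroup M] (ι : A →+ M)
    (hι : Function.Injective ι) (S : Set M) (hS : S.Finite)
    (h : ∀ a, ι a ∈ AddSubgroup.closure S) : AddGroup.FG A := by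
  have h1 : Module.Finite ℤ (Submodule.span ℤ S) := Module.Finite.span_of_finite ℤ hS
  have hmem : ∀ a, ι.toIntLinearMap a ∈ Submodule.span ℤ S := by
    intro a
    have := h a
    rw [← Submodule.span_int_eq_addSubgroupClosure] at this
    exact this
  have h2 : Module.Finite ℤ A :=
    Module.Finite.of_injective (ι.toIntLinearMap.codRestrict (Submodule.span ℤ S) hmem)
      (fun a b hab => hι (congrArg Subtype.val hab))
  exact Module.Finite.iff_addGroup_fg.1 h2

theorem barK_d2 {C : Type} [Category.{0} C] {X₀ X₁ X₂ : C} (f : X₀ ⟶ X₁) (g : X₁ ⟶ X₂) :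
    (barK C).d 2 1 (bas (.mk₂ f g)) =
      bas (.mk₁ g) - bas (.mk₁ (f ≫ g)) + bas (.mk₁ f) := by
  rw [barK_d, Fin.sum_univ_three, nerve.δ₀_mk₂_eq, nerve.δ₁_mk₂_eq, nerve.δ₂_mk₂_eq]
  simp [sub_eq_add_neg]

theorem barK_d3 {C : Type} [Category.{0} C] {X₀ X₁ X₂ X₃ : C} (f : X₀ ⟶ X₁) (g : X₁ ⟶ X₂)
    (k : X₂ ⟶ X₃) :
    (barK C).d 3 2 (bas (.mk₃ f g k)) =
      bas (.mk₂ g k) - bas (.mk₂ (f ≫ g) k) + bas (.mk₂ f (g ≫ k)) - bas (.mk₂ f g) := by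
  rw [barK_d, Fin.sum_univ_four, face0, face1, face2, face3]
  simp [sub_eq_add_neg, pow_succ]

/-- Edge of the nerve. -/
abbrev edgeG {G : Type} [Group G] (x : G) : ComposableArrows (SingleObj G) 1 :=
  .mk₁ (X₀ := SingleObj.star G) (X₁ := SingleObj.star G) x

/-- Triangle of the nerve. -/
abbrev triG {G : Type} [Group G] (x y : G) : ComposableArrows (SingleObj G) 2 :=
  .mk₂ (X₀ := SingleObj.star G) (X₁ := SingleObj.star G) (X₂ := SingleObj.star G) y x

theorem main_aux (G : Type) [Group G] (hG : IsFinitelyPresentedGroup G) :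
    AddGroup.FG ((barK (SingleObj G)).homology 2) := by
  let K := barK (SingleObj G)
  let c : G → G → K.opcycles 2 := fun x y => K.pOpcycles 2 (bas (triG x y))
  have hc : IsCoc c := by
    intro x y z
    have h1 := barK_d3 (C := SingleObj G) (X₀ := SingleObj.star G) (X₁ := SingleObj.star G)
      (X₂ := SingleObj.star G) (X₃ := SingleObj.star G) z y x
    have h2 := congrArg (K.pOpcycles 2) h1
    have h3 : K.pOpcycles 2 (K.d 3 2 (bas (.mk₃ (X₀ := SingleObj.star G) (X₁ := SingleObj.star G)
      (X₂ := SingleObj.star G) (X₃ := SingleObj.star G) z y x))) = 0 := by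
      rw [← ModuleCat.comp_apply, K.d_pOpcycles]; rfl
    rw [h3, map_sub, map_add, map_sub] at h2
    have h4 : 0 = c x y - c x (y * z) + c (x * y) z - c y z := h2
    rw [← sub_eq_zero, ← sub_eq_zero.2 h4.symm]
    abel
  obtain ⟨S, t, hS, ht⟩ := coc_key hG c hc
  let N : AddSubgroup (K.opcycles 2) := AddSubgroup.closure S
  let Q := K.opcycles 2 ⧸ N
  let mk : K.opcycles 2 →+ Q := QuotientAddGroup.mk' N
  have htN : ∀ x y, mk (c x y) = mk (t x + t y - t (x * y)) := by
    intro x y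
    rw [← sub_eq_zero, ← map_sub]
    exact (QuotientAddGroup.eq_zero_iff _).2 (ht x y)
  let mkL : K.opcycles 2 →ₗ[ℤ] Q :=
    { toFun := mk
      map_add' := map_add mk
      map_smul' := fun r x => 
        (congrArg mk (int_smul_eq_zsmul (K.opcycles 2).isModule r x)).trans (map_zsmul mk r x) }
  let q : K.opcycles 2 ⟶ ModuleCat.of ℤ Q := ModuleCat.ofHom mkL
  let T : K.X 1 ⟶ ModuleCat.of ℤ Q :=
    ModuleCat.freeDesc (R := ℤ) (X := ComposableArrows (SingleObj G) 1)
      (↾fun a => mk (t (a.map' 0 1 : _ ⟶ _)))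
  have hT : ∀ x : G, T (bas (edgeG x)) = mk (t x) := fun x =>
    ModuleCat.freeDesc_apply _ _
  have hq : K.pOpcycles 2 ≫ q = K.d 2 1 ≫ T := by
    refine ModuleCat.free_hom_ext (R := ℤ) (X := ComposableArrows (SingleObj G) 2) fun a => ?_
    obtain ⟨X₀, X₁, X₂, y, x, rfl⟩ := ComposableArrows.mk₂_surjective a
    have h1 := congrArg T (barK_d2 (C := SingleObj G) y x)
    rw [map_add, map_sub] at h1
    refine Eq.trans ?_ h1.symm
    refine (htN x y).trans ?_
    rw [map_sub, map_add]
    have e1 := hT x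
    have e2 := hT y
    have e3 := hT (x * y)
    rw [← e1, ← e2, ← e3, add_sub_right_comm]
    rfl
  have hq' : q = K.fromOpcycles 2 1 ≫ T := by
    rw [← cancel_epi (K.pOpcycles 2), hq, K.p_fromOpcycles_assoc]
  have hz : K.homologyι 2 ≫ q = 0 := by
    rw [hq', K.homologyι_comp_fromOpcycles_assoc, Limits.zero_comp]
  have hmem : ∀ v, (K.homologyι 2).hom v ∈ N := by
    intro v
    rw [← QuotientAddGroup.eq_zero_iff]
    exact congrArg (fun f => f.hom v) hz
  have hinj : Function.Injective (K.homologyι 2).hom :=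
    (ModuleCat.mono_iff_injective _).1 inferInstance
  exact fg_of_inj (K.homologyι 2).hom.toAddMonoidHom hinj S hS hmem

/-- A finitely presented group has finitely generated second integral homology. -/
theorem stmt_13 (G : Type) [Group G] (hG : IsFinitelyPresentedGroup G) :
    AddGroup.FG (groupHomologyZ 2 G) := by
  exact main_aux G hG
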